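/- Let f: 𝒳 → ℝ be convex, differentiable, and (r,ℓ)-smooth on open convex 𝒳 ⊆ ℝ^d. Let x ∈ 𝒳 and y ∈ B(x, r(‖∇f(x)‖)/2). Then y ∈ 𝒳 and ⟨∇f(x) − ∇f(y), x − y⟩ ≥ (1/L)‖∇f(x) − ∇f(y)‖² where L = ℓ(‖∇f(x)‖). -/

import Mathlib

open RealInnerProductSpace

/-!
Put `L = ℓ ‖∇f x‖`. For `a`, `b` in the ball, compare `f` at `z = a - (1 / L) • (∇f a - ∇f b)` with
its tangent at `b` (a lower bound, by convexity) and with its quadratic model at `a` (an upper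
bound, as `∇f` is `L`-Lipschitz); `z` minimizes the gap between the two, and the comparison reads
`f b + ⟪∇f b, a - b⟫ + ‖∇f a - ∇f b‖ ^ 2 / (2 * L) ≤ f a`. Adding this for `(a, b) = (x, y)` and
`(a, b) = (y, x)` gives co-coercivity. The radius for `y` is halved because the points
`z`, at distance at most `‖x - y‖` from `a`, must stay in the ball where `∇f` is Lipschitz.
-/

section NormedSpace

variable {E F : Type*} [NormedAddCommGroup E] [NormedSpace ℝ E]
  [NormedAddCommGroup F] [NormedSpace ℝ F] {s : Set E} {a b : E}

lemma add_fderivWithin_le_of_convexOn {f : E → ℝ} {f' : E →L[ℝ] ℝ} (hf : ConvexOn ℝ s f)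
    (ha : a ∈ s) (hb : b ∈ s) (hf' : HasFDerivWithinAt f f' s a) :
    f a + f' (b - a) ≤ f b := by
  let γ : ℝ →ᵃ[ℝ] E := AffineMap.lineMap a b
  have hγ₀ : γ 0 = a := AffineMap.lineMap_apply_zero a b
  have hγ₁ : γ 1 = b := AffineMap.lineMap_apply_one a b
  have hderiv : HasDerivWithinAt (f ∘ γ) (f' (b - a)) (γ ⁻¹' s) 0 :=
    hf'.comp_hasDerivWithinAt_of_eq 0 AffineMap.hasDerivWithinAt_lineMap
      (Set.mapsTo_preimage γ s) hγ₀.symm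
  have hslope : f' (b - a) ≤ slope (f ∘ γ) 0 1 :=
    (hf.comp_affineMap γ).le_slope_of_hasDerivWithinAt (by simpa only [Set.mem_preimage, hγ₀])
      (by simpa only [Set.mem_preimage, hγ₁]) one_pos hderiv
  rw [slope_def_field, Function.comp_apply, Function.comp_apply, hγ₀, hγ₁, sub_zero,
    div_one] at hslope
  linarith

lemma norm_sub_sub_fderivWithin_le_of_starConvex {f : E → F} {f' : E → E →L[ℝ] F} {C : ℝ}
    (hs : StarConvex ℝ a s) (hf' : ∀ z ∈ s, HasFDerivWithinAt f (f' z) s z)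
    (hC : ∀ z ∈ s, ‖f' z - f' a‖ ≤ C * ‖z - a‖) (hb : b ∈ s) :
    ‖f b - f a - f' a (b - a)‖ ≤ C / 2 * ‖b - a‖ ^ 2 := by
  let γ : ℝ → E := fun t ↦ a + t • (b - a)
  have hγ : Set.MapsTo γ (Set.Icc 0 1) s := fun t ht ↦ hs.add_smul_sub_mem hb ht.1 ht.2
  have hγ' (t : ℝ) : HasDerivAt γ (b - a) t :=
    (((hasDerivAt_id t).smul_const (b - a)).const_add a).congr_deriv (one_smul ℝ _)
  let φ : ℝ → F := fun t ↦ f (γ t) - f a - t • f' a (b - a)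
  have hφ : ∀ t ∈ Set.Icc (0 : ℝ) 1,
      HasDerivWithinAt φ ((f' (γ t) - f' a) (b - a)) (Set.Icc 0 1) t := fun t ht ↦ by
    have hfγ := (hf' _ (hγ ht)).comp_hasDerivWithinAt t (hγ' t).hasDerivWithinAt hγ
    have hlin := ((hasDerivAt_id t).smul_const (f' a (b - a))).hasDerivWithinAt (s := Set.Icc 0 1)
    exact ((hfγ.sub_const (f a)).sub hlin).congr_deriv
      (by rw [one_smul, sub_apply])
  have hbound : ∀ t ∈ Set.Ico (0 : ℝ) 1,
      ‖(f' (γ t) - f' a) (b - a)‖ ≤ C * ‖b - a‖ ^ 2 * t := fun t ht ↦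
    calc ‖(f' (γ t) - f' a) (b - a)‖
        ≤ C * ‖γ t - a‖ * ‖b - a‖ :=
          ContinuousLinearMap.le_of_opNorm_le _ (hC _ (hγ (Set.Ico_subset_Icc_self ht))) _
      _ = C * ‖b - a‖ ^ 2 * t := by
          rw [add_sub_cancel_left, norm_smul, Real.norm_of_nonneg ht.1]; ring
  have hquad (t : ℝ) :
      HasDerivAt (fun t ↦ C / 2 * ‖b - a‖ ^ 2 * t ^ 2) (C * ‖b - a‖ ^ 2 * t) t :=
    ((hasDerivAt_pow 2 t).const_mul (C / 2 * ‖b - a‖ ^ 2)).congr_deriv (by ring)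
  have hφ₁ : ‖φ 1‖ ≤ C / 2 * ‖b - a‖ ^ 2 * 1 ^ 2 :=
    image_norm_le_of_norm_deriv_right_le_deriv_boundary
      (fun t ht ↦ (hφ t ht).continuousWithinAt)
      (fun t ht ↦ (hφ t (Set.Ico_subset_Icc_self ht)).mono_of_mem_nhdsWithin
        (Icc_mem_nhdsGE_of_mem ht))
      (by simp [φ, γ]) hquad hbound (Set.right_mem_Icc.2 zero_le_one)
  simpa only [φ, γ, one_smul, add_sub_cancel, one_pow, mul_one] using hφ₁

end NormedSpace

section InnerProductSpace

variable {E : Type*} [NormedAddCommGroup E] [InnerProductSpace ℝ E] [CompleteSpace E]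
  {f : E → ℝ} {g : E → E} {s : Set E} {a b x y : E} {L R : ℝ}

lemma le_add_inner_gradient_add_sq (hs : StarConvex ℝ a s)
    (hg : ∀ z ∈ s, HasGradientWithinAt f (g z) s z)
    (hL : ∀ z ∈ s, ‖g z - g a‖ ≤ L * ‖z - a‖) (hb : b ∈ s) :
    f b ≤ f a + ⟪g a, b - a⟫ + L / 2 * ‖b - a‖ ^ 2 := by
  have hremainder : ‖f b - f a - ⟪g a, b - a⟫‖ ≤ L / 2 * ‖b - a‖ ^ 2 :=
    norm_sub_sub_fderivWithin_le_of_starConvex hs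
      (fun z hz ↦ (hg z hz).hasFDerivWithinAt)
      (fun z hz ↦ by simpa only [← map_sub, LinearIsometryEquiv.norm_map] using hL z hz) hb
  linarith [Real.le_norm_self (f b - f a - ⟪g a, b - a⟫)]

lemma add_inner_gradient_add_sq_le_of_convexOn (hf : ConvexOn ℝ s f)
    (hg : ∀ z ∈ s, HasGradientWithinAt f (g z) s z) (hL₀ : 0 < L)
    (hL : ∀ z ∈ s, ‖g z - g a‖ ≤ L * ‖z - a‖) (ha : a ∈ s) (hb : b ∈ s)
    (hstep : a - (1 / L) • (g a - g b) ∈ s) :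
    f b + ⟪g b, a - b⟫ + 1 / (2 * L) * ‖g a - g b‖ ^ 2 ≤ f a := by
  set w := g a - g b with hw
  set z := a - (1 / L) • w with hz
  have htangent : f b + ⟪g b, z - b⟫ ≤ f z :=
    add_fderivWithin_le_of_convexOn hf hb hstep (hg b hb).hasFDerivWithinAt
  have hmodel : f z ≤ f a + ⟪g a, z - a⟫ + L / 2 * ‖z - a‖ ^ 2 :=
    le_add_inner_gradient_add_sq (hf.1.starConvex ha) hg hL hstep
  have hza : z - a = -((1 / L) • w) := by rw [hz]; abel
  have hinner : ⟪g a, z - a⟫ - ⟪g b, z - b⟫ = -(1 / L * ‖w‖ ^ 2) - ⟪g b, a - b⟫ :=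
    calc ⟪g a, z - a⟫ - ⟪g b, z - b⟫
        = ⟪w, z - a⟫ - ⟪g b, a - b⟫ := by simp only [hw, inner_sub_left, inner_sub_right]; ring
      _ = -(1 / L * ‖w‖ ^ 2) - ⟪g b, a - b⟫ := by
          rw [hza, inner_neg_right, real_inner_smul_right, real_inner_self_eq_norm_sq]
  have hsq : L / 2 * ‖z - a‖ ^ 2 = 1 / L * ‖w‖ ^ 2 - 1 / (2 * L) * ‖w‖ ^ 2 := by
    rw [hza, norm_neg, norm_smul, Real.norm_of_nonneg (one_div_pos.2 hL₀).le]
    field_simp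
    ring
  linarith

lemma gradient_cocoercive_of_convexOn (hf : ConvexOn ℝ s f)
    (hg : ∀ z ∈ s, HasGradientWithinAt f (g z) s z) (hL₀ : 0 < L)
    (hL : ∀ z₁ ∈ s, ∀ z₂ ∈ s, ‖g z₁ - g z₂‖ ≤ L * ‖z₁ - z₂‖) (ha : a ∈ s) (hb : b ∈ s)
    (hstep_a : a - (1 / L) • (g a - g b) ∈ s) (hstep_b : b - (1 / L) • (g b - g a) ∈ s) :
    1 / L * ‖g a - g b‖ ^ 2 ≤ ⟪g a - g b, a - b⟫ := by
  have hab := add_inner_gradient_add_sq_le_of_convexOn hf hg hL₀ (fun z hz ↦ hL z hz a ha)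
    ha hb hstep_a
  have hba := add_inner_gradient_add_sq_le_of_convexOn hf hg hL₀ (fun z hz ↦ hL z hz b hb)
    hb ha hstep_b
  rw [norm_sub_rev, ← neg_sub a b, inner_neg_right] at hba
  calc 1 / L * ‖g a - g b‖ ^ 2
      = 1 / (2 * L) * ‖g a - g b‖ ^ 2 + 1 / (2 * L) * ‖g a - g b‖ ^ 2 := by field_simp; ring
    _ ≤ ⟪g a, a - b⟫ - ⟪g b, a - b⟫ := by linarith
    _ = ⟪g a - g b, a - b⟫ := (inner_sub_left _ _ _).symm

theorem local_cocoercivity_general (hf : ConvexOn ℝ (Metric.closedBall x R) f)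
    (hg : ∀ z ∈ Metric.closedBall x R, HasGradientWithinAt f (g z) (Metric.closedBall x R) z)
    (hL₀ : 0 < L)
    (hL : ∀ z₁ ∈ Metric.closedBall x R, ∀ z₂ ∈ Metric.closedBall x R,
      ‖g z₁ - g z₂‖ ≤ L * ‖z₁ - z₂‖)
    (hy : y ∈ Metric.closedBall x (R / 2)) :
    1 / L * ‖g x - g y‖ ^ 2 ≤ ⟪g x - g y, x - y⟫ := by
  have hR : 0 ≤ R / 2 := Metric.nonneg_of_mem_closedBall hy
  have hx : x ∈ Metric.closedBall x (R / 2) := Metric.mem_closedBall_self hR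
  have hhalf : Metric.closedBall x (R / 2) ⊆ Metric.closedBall x R :=
    Metric.closedBall_subset_closedBall (by linarith)
  have hstep : ∀ p ∈ Metric.closedBall x (R / 2), ∀ u v : E, ‖u - v‖ ≤ L * (R / 2) →
      p - (1 / L) • (u - v) ∈ Metric.closedBall x R := fun p hp u v huv ↦ by
    have hlength : ‖(1 / L) • (u - v)‖ ≤ R / 2 := by
      rwa [norm_smul, Real.norm_of_nonneg (one_div_pos.2 hL₀).le, one_div, inv_mul_le_iff₀ hL₀]
    rw [mem_closedBall_iff_norm] at hp ⊢
    rw [sub_right_comm]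
    linarith [norm_sub_le (p - x) ((1 / L) • (u - v))]
  have hgrad : ‖g x - g y‖ ≤ L * (R / 2) :=
    (hL x (hhalf hx) y (hhalf hy)).trans
      (mul_le_mul_of_nonneg_left (mem_closedBall_iff_norm'.1 hy) hL₀.le)
  exact gradient_cocoercive_of_convexOn hf hg hL₀ hL (hhalf hx) (hhalf hy)
    (hstep x hx _ _ hgrad) (hstep y hy _ _ (norm_sub_rev (g x) (g y) ▸ hgrad))

end InnerProductSpace

theorem local_cocoercivity (d : ℕ)
    (X : Set (EuclideanSpace ℝ (Fin d))) (hX : IsOpen X) (hXconv : Convex ℝ X)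
    (f : EuclideanSpace ℝ (Fin d) → ℝ) (hconv : ConvexOn ℝ X f)
    (g : EuclideanSpace ℝ (Fin d) → EuclideanSpace ℝ (Fin d))
    (hgrad : ∀ x ∈ X, HasGradientAt f (g x) x)
    (ℓ r : ℝ → ℝ) (hℓmono : Monotone ℓ) (hℓpos : ∀ u : ℝ, 0 ≤ u → 0 < ℓ u)
    (hranti : Antitone r) (hrpos : ∀ u : ℝ, 0 ≤ u → 0 < r u)
    (hball : ∀ x ∈ X, Metric.closedBall x (r ‖g x‖) ⊆ X)
    (hlip : ∀ x ∈ X, ∀ x₁ ∈ Metric.closedBall x (r ‖g x‖),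
      ∀ x₂ ∈ Metric.closedBall x (r ‖g x‖),
        ‖g x₁ - g x₂‖ ≤ ℓ ‖g x‖ * ‖x₁ - x₂‖)
    (x y : EuclideanSpace ℝ (Fin d)) (hx : x ∈ X)
    (hy : y ∈ Metric.closedBall x (r ‖g x‖ / 2)) :
    y ∈ X ∧ ⟪g x - g y, x - y⟫ ≥ (1 / ℓ ‖g x‖) * ‖g x - g y‖ ^ 2 :=
  ⟨hball x hx (Metric.closedBall_subset_closedBall (half_le_self (hrpos _ (norm_nonneg _)).le) hy),
    local_cocoercivity_general (hconv.subset (hball x hx) (convex_closedBall _ _))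
      (fun z hz ↦ (hgrad z (hball x hx hz)).hasFDerivAt.hasFDerivWithinAt)
      (hℓpos _ (norm_nonneg _)) (hlip x hx) hy⟩
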